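/- arXiv:1503.08529 — 2 statements merged into one kernel-verified Lean document; each statement's English description precedes it below -/
import Mathlib

section
/- There exists a constant C>0 such that, for all b>0 and all r≥1, e_N(b,r)/r² ≥ g(b) − C √b / r. -/
open MeasureTheory Real Set Filter Topology

noncomputable section

/-- The open square `Q_r = (-r/2, r/2) × (-r/2, r/2)`. -/
def Qsq (r : ℝ) : Set (ℝ × ℝ) := Ioo (-r/2) (r/2) ×ˢ Ioo (-r/2) (r/2)

/-- The vertical strip `S_R = (-R/2, R/2) × ℝ`. -/
def Strip (R : ℝ) : Set (ℝ × ℝ) := Ioo (-R/2) (R/2) ×ˢ (univ : Set ℝ)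

/-- The magnetic potential `A₀(x) = (-x₂/2, x₁/2)` of the constant unit magnetic field. -/
def A₀ (x : ℝ × ℝ) : ℝ × ℝ := (-x.2 / 2, x.1 / 2)

/-- The magnetic potential `A_van(x) = (-x₂²/2, 0)` generating the field `B(x) = x₂`. -/
def Avan (x : ℝ × ℝ) : ℝ × ℝ := (-x.2 ^ 2 / 2, 0)

/-- The magnetic gradient energy density `|(∇ - iA)u|²` at `x`. -/
def magGradSq (A : ℝ × ℝ → ℝ × ℝ) (u : ℝ × ℝ → ℂ) (x : ℝ × ℝ) : ℝ :=
  ‖fderiv ℝ u x (1, 0) - Complex.I * ((A x).1 : ℂ) * u x‖ ^ 2 +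
  ‖fderiv ℝ u x (0, 1) - Complex.I * ((A x).2 : ℂ) * u x‖ ^ 2

/-- The Ginzburg–Landau functional `F_{b,Q_r}` on the square `Q_r`. -/
def Fsq (b r : ℝ) (u : ℝ × ℝ → ℂ) : ℝ :=
  ∫ x in Qsq r, (b * magGradSq A₀ u x - ‖u x‖ ^ 2 + ‖u x‖ ^ 4 / 2)

/-- (Smooth surrogate of) membership in `H¹(Q_r; ℂ)`. -/
def MemH1sq (u : ℝ × ℝ → ℂ) : Prop := ContDiff ℝ 1 u

/-- (Smooth surrogate of) membership in `H¹₀(Q_r; ℂ)`: vanishing on the boundary. -/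
def MemH10sq (r : ℝ) (u : ℝ × ℝ → ℂ) : Prop :=
  ContDiff ℝ 1 u ∧ ∀ x ∈ frontier (Qsq r), u x = 0

/-- The Dirichlet ground-state energy `e_D(b, r)`. -/
def eD (b r : ℝ) : ℝ := sInf (Fsq b r '' {u | MemH10sq r u})

/-- The Neumann ground-state energy `e_N(b, r)`. -/
def eN (b r : ℝ) : ℝ := sInf (Fsq b r '' {u | MemH1sq u})

/-- The energy density of the strip functional `𝓔_{L,R}` at `x`. -/
def stripDensity (L : ℝ) (u : ℝ × ℝ → ℂ) (x : ℝ × ℝ) : ℝ :=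
  magGradSq Avan u x - L ^ (-(2:ℝ)/3) * ‖u x‖ ^ 2 + (L ^ (-(2:ℝ)/3) / 2) * ‖u x‖ ^ 4

/-- The strip functional `𝓔_{L,R}`. -/
def Estrip (L R : ℝ) (u : ℝ × ℝ → ℂ) : ℝ := ∫ x in Strip R, stripDensity L u x

/-- (Surrogate of) membership in the space `H¹_{mag,0}(S_R)`. -/
def MemH1mag0 (R : ℝ) (u : ℝ × ℝ → ℂ) : Prop :=
  ContDiff ℝ 1 u ∧
  IntegrableOn (fun x => ‖u x‖ ^ 2) (Strip R) ∧
  IntegrableOn (magGradSq Avan u) (Strip R) ∧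
  IntegrableOn (fun x => ‖u x‖ ^ 4) (Strip R) ∧
  ∀ x ∈ frontier (Strip R), u x = 0

/-- The ground-state energy `e_gs(L; R)` of the strip functional. -/
def egs (L R : ℝ) : ℝ := sInf (Estrip L R '' {u | MemH1mag0 R u})

/-- `g : (0,∞) → ℝ` is the thermodynamic limit of the Dirichlet square energies. -/
def IsLimitG (g : ℝ → ℝ) : Prop :=
  ∀ b > 0, Tendsto (fun r => eD b r / r ^ 2) atTop (nhds (g b))

/-- `E : (0,∞) → ℝ` is the large-`R` limit of the strip energies. -/
def IsLimitE (E : ℝ → ℝ) : Prop :=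
  ∀ L > 0, Tendsto (fun R => egs L R / R) atTop (nhds (E L))

/-!
A Neumann competitor `u` on `Q_r` is multiplied by `1 - ρ⁴`, where `ρ` rises from `0` to `1` in a
layer of width `√b` along the boundary. By convexity of the square the magnetic gradient term grows
by at most a constant times `b |∇ρ|² ρ² |u|²`, where `b |∇ρ|²` is bounded uniformly in `b` and `r`,
while the quartic term loses at least `ρ⁴ |u|⁴ / 2`. This loss absorbs every term of order
`ρ² |u|²` up to a constant, whatever the size of `u`, so the energy rises by at most a constant
times the area `4 √b r` of the layer. With `1 - ρ^q` in place of `1 - ρ⁴` the gradient error has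
order `ρ^(q - 2)` and the quartic gain order `ρ^q`, and the absorption needs `2 (q - 2) ≥ q`.

The resulting function `v` is supported in `Q_r`. Its `N²` magnetic translates tile `Q_{N r}`, hence
`e_D(b, N r) ≤ N² F_{b,r}(v)`, and `N → ∞` gives `g(b) r² ≤ F_{b,r}(v)`.
-/

section Calculus

lemma fderiv_eq_zero_of_support_subset {E F : Type*} [NormedAddCommGroup E] [NormedSpace ℝ E]
    [NormedAddCommGroup F] [NormedSpace ℝ F] {s : Set E} (hs : IsOpen s) (hconv : Convex ℝ s)
    {f : E → F} (hf : Function.support f ⊆ s) {x : E} (hx : x ∉ s) : fderiv ℝ f x = 0 := by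
  by_cases hdiff : DifferentiableAt ℝ f x
  swap
  · exact fderiv_zero_of_not_differentiableAt hdiff
  have hzero : EqOn f 0 sᶜ := fun y hy => Function.notMem_support.1 fun h => hy (hf h)
  obtain rfl | ⟨a, ha⟩ := s.eq_empty_or_nonempty
  · rw [show f = 0 from funext fun y => hzero (notMem_empty y), fderiv_zero]
    rfl
  -- `f` vanishes on a closed half-space through `x`, where derivatives are unique.
  obtain ⟨φ, hφ⟩ := geometric_hahn_banach_open_point hconv hs hx
  have hhalf : {y | φ x ≤ φ y} ⊆ sᶜ := fun y hy hys => (hφ y hys).not_ge hy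
  have hopen : IsOpen {y | φ x < φ y} := isOpen_lt continuous_const φ.continuous
  have hsub : {y | φ x < φ y} ⊆ {y | φ x ≤ φ y} :=
    ofPred_subset_ofPred.2 fun _ => le_of_lt
  have hinterior : (interior {y | φ x ≤ φ y}).Nonempty := by
    refine ⟨x + (x - a), interior_maximal hsub hopen ?_⟩
    simpa only [mem_ofPred_eq, map_add, map_sub, lt_add_iff_pos_right, sub_pos] using hφ a ha
  have hunique : UniqueDiffWithinAt ℝ {y | φ x ≤ φ y} x :=
    uniqueDiffWithinAt_convex (convex_halfSpace_ge φ.toLinearMap.isLinear _) hinterior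
      (subset_closure (le_refl (φ x)))
  rw [← hdiff.fderivWithin hunique,
    fderivWithin_congr (hzero.mono hhalf) (hzero hx), Pi.zero_def, fderivWithin_fun_const]
  rfl

lemma exists_lipschitzWith_smoothTransition :
    ∃ K : NNReal, LipschitzWith K Real.smoothTransition := by
  obtain ⟨K, hK⟩ := (Real.smoothTransition.contDiff (n := 1)).locallyLipschitz.locallyLipschitzOn
    |>.exists_lipschitzOnWith_of_compact (isCompact_Icc (a := (0 : ℝ)) (b := 1))
  refine ⟨K, LipschitzWith.of_dist_le_mul fun s t => ?_⟩
  rw [← Real.smoothTransition.projIcc (x := s), ← Real.smoothTransition.projIcc (x := t)]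
  exact (hK.dist_le_mul _ (projIcc 0 1 zero_le_one s).2 _ (projIcc 0 1 zero_le_one t).2).trans
    (mul_le_mul_of_nonneg_left
      ((LipschitzWith.projIcc zero_le_one).dist_le_mul s t |>.trans_eq (one_mul _)) K.2)

lemma integrableOn_of_continuous_of_isBounded {f : ℝ × ℝ → ℝ} (hf : Continuous f)
    {Ω : Set (ℝ × ℝ)} (hΩ : Bornology.IsBounded Ω) : IntegrableOn f Ω :=
  (hf.continuousOn.integrableOn_compact hΩ.isCompact_closure).mono_set subset_closure

end Calculus

section Square

lemma isOpen_Qsq (r : ℝ) : IsOpen (Qsq r) := isOpen_Ioo.prod isOpen_Ioo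

lemma convex_Qsq (r : ℝ) : Convex ℝ (Qsq r) := (convex_Ioo _ _).prod (convex_Ioo _ _)

lemma isBounded_Qsq (r : ℝ) : Bornology.IsBounded (Qsq r) :=
  (Metric.isBounded_Ioo _ _).prod (Metric.isBounded_Ioo _ _)

lemma volume_real_Qsq (r : ℝ) : volume.real (Qsq r) = max r 0 ^ 2 := by
  rw [Qsq, Measure.volume_eq_prod, measureReal_prod_prod, Real.volume_real_Ioo, sq]
  ring_nf

lemma Qsq_subset_Qsq {r s : ℝ} (h : r ≤ s) : Qsq r ⊆ Qsq s :=
  prod_mono (Ioo_subset_Ioo (by linarith) (by linarith))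
    (Ioo_subset_Ioo (by linarith) (by linarith))

lemma volume_real_Qsq_diff_le {r l : ℝ} (hr : 0 ≤ r) (hl : 0 ≤ l) :
    volume.real (Qsq r \ Qsq (r - 2 * l)) ≤ 4 * l * r := by
  rw [measureReal_sdiff (Qsq_subset_Qsq (by linarith)) (isOpen_Qsq _).measurableSet
    (isBounded_Qsq _).measure_lt_top.ne, volume_real_Qsq, volume_real_Qsq, max_eq_left hr]
  obtain h | h := le_total (r - 2 * l) 0
  · rw [max_eq_right h]
    nlinarith
  · rw [max_eq_left h]
    nlinarith

end Square

section Energy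

/-- The component along `e` of the magnetic gradient `(∇ - iA)u` at `x`. -/
def magDeriv (A : ℝ × ℝ → ℝ × ℝ) (u : ℝ × ℝ → ℂ) (x e : ℝ × ℝ) : ℂ :=
  fderiv ℝ u x e - Complex.I * (((A x).1 * e.1 + (A x).2 * e.2 : ℝ) : ℂ) * u x

/-- The Ginzburg–Landau energy density `b|(∇ - iA)u|² - |u|² + |u|⁴/2` at `x`. -/
def glDensity (A : ℝ × ℝ → ℝ × ℝ) (b : ℝ) (u : ℝ × ℝ → ℂ) (x : ℝ × ℝ) : ℝ :=
  b * magGradSq A u x - ‖u x‖ ^ 2 + ‖u x‖ ^ 4 / 2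

/-- The Ginzburg–Landau energy of `u` on `Ω`, so that `Fsq b r` is `glEnergy A₀ b (Qsq r)`. -/
def glEnergy (A : ℝ × ℝ → ℝ × ℝ) (b : ℝ) (Ω : Set (ℝ × ℝ)) (u : ℝ × ℝ → ℂ) : ℝ :=
  ∫ x in Ω, glDensity A b u x

variable {A : ℝ × ℝ → ℝ × ℝ} {b : ℝ} {Ω : Set (ℝ × ℝ)} {u : ℝ × ℝ → ℂ} {x : ℝ × ℝ}

lemma magGradSq_eq (A : ℝ × ℝ → ℝ × ℝ) (u : ℝ × ℝ → ℂ) (x : ℝ × ℝ) :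
    magGradSq A u x = ‖magDeriv A u x (1, 0)‖ ^ 2 + ‖magDeriv A u x (0, 1)‖ ^ 2 := by
  simp [magGradSq, magDeriv]

lemma magDeriv_mul {f : ℝ × ℝ → ℂ} (hf : DifferentiableAt ℝ f x) (hu : DifferentiableAt ℝ u x)
    (e : ℝ × ℝ) :
    magDeriv A (fun y => f y * u y) x e = f x * magDeriv A u x e + fderiv ℝ f x e * u x := by
  simp only [magDeriv, fderiv_fun_mul hf hu, _root_.add_apply, _root_.smul_apply, smul_eq_mul]
  ring

lemma glDensity_eq_zero (hu : u x = 0) (hdu : fderiv ℝ u x = 0) : glDensity A b u x = 0 := by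
  simp [glDensity, magGradSq, hu, hdu]

lemma glDensity_congr {v : ℝ × ℝ → ℂ} (h : u =ᶠ[𝓝 x] v) :
    glDensity A b u x = glDensity A b v x := by
  simp only [glDensity, magGradSq, h.fderiv_eq, h.eq_of_nhds]

lemma neg_half_le_glDensity (hb : 0 ≤ b) : -1 / 2 ≤ glDensity A b u x := by
  have hgrad : 0 ≤ b * magGradSq A u x := mul_nonneg hb (by unfold magGradSq; positivity)
  unfold glDensity
  linarith [sq_nonneg (‖u x‖ ^ 2 - 1)]

lemma continuous_magDeriv (hA : Continuous A) (hu : ContDiff ℝ 1 u) (e : ℝ × ℝ) :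
    Continuous fun x => magDeriv A u x e :=
  ((hu.continuous_fderiv one_ne_zero).clm_apply continuous_const).sub
    (Continuous.mul (by fun_prop) hu.continuous)

lemma continuous_glDensity (hA : Continuous A) (hu : ContDiff ℝ 1 u) :
    Continuous (glDensity A b u) := by
  have hgrad : Continuous (magGradSq A u) := by
    rw [funext (magGradSq_eq A u)]
    exact ((continuous_magDeriv hA hu _).norm.pow 2).add ((continuous_magDeriv hA hu _).norm.pow 2)
  exact ((continuous_const.mul hgrad).sub (hu.continuous.norm.pow 2)).add
    ((hu.continuous.norm.pow 4).div_const 2)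

lemma integrableOn_glDensity (hA : Continuous A) (hΩ : Bornology.IsBounded Ω)
    (hu : ContDiff ℝ 1 u) : IntegrableOn (glDensity A b u) Ω :=
  integrableOn_of_continuous_of_isBounded (continuous_glDensity hA hu) hΩ

lemma neg_half_volume_le_glEnergy (hb : 0 ≤ b) (hΩ : volume Ω ≠ ⊤) :
    -(volume.real Ω) / 2 ≤ glEnergy A b Ω u := by
  by_cases hint : IntegrableOn (glDensity A b u) Ω
  · calc -(volume.real Ω) / 2 = ∫ _ in Ω, (-1 / 2 : ℝ) := by
          rw [setIntegral_const, smul_eq_mul]; ring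
      _ ≤ glEnergy A b Ω u := setIntegral_mono (integrableOn_const hΩ) hint
          fun x => neg_half_le_glDensity hb
  · rw [glEnergy, integral_undef hint]
    linarith [measureReal_nonneg (μ := volume) (s := Ω)]

lemma glEnergy_sum {ι : Type*} {s : Finset ι} {U : ι → Set (ℝ × ℝ)} {f : ι → ℝ × ℝ → ℂ}
    (hA : Continuous A) (hΩ : MeasurableSet Ω) (hΩb : Bornology.IsBounded Ω)
    (hUopen : ∀ i ∈ s, IsOpen (U i)) (hUconv : ∀ i ∈ s, Convex ℝ (U i))
    (hUΩ : ∀ i ∈ s, U i ⊆ Ω) (hdisj : (s : Set ι).PairwiseDisjoint U)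
    (hf : ∀ i ∈ s, ContDiff ℝ 1 (f i)) (hsupp : ∀ i ∈ s, Function.support (f i) ⊆ U i) :
    glEnergy A b Ω (fun x => ∑ i ∈ s, f i x) = ∑ i ∈ s, glEnergy A b (U i) (f i) := by
  have hzero {i : ι} (hi : i ∈ s) {x : ℝ × ℝ} (hx : x ∉ U i) : f i x = 0 :=
    Function.notMem_support.1 fun h => hx (hsupp i hi h)
  have hoff (x) (hx : x ∈ Ω \ ⋃ i ∈ s, U i) : glDensity A b (fun x => ∑ i ∈ s, f i x) x = 0 := by
    have hxU {i : ι} (hi : i ∈ s) : x ∉ U i := fun h => hx.2 (mem_biUnion hi h)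
    refine glDensity_eq_zero (Finset.sum_eq_zero fun i hi => hzero hi (hxU hi)) ?_
    rw [fderiv_fun_sum fun i hi => (hf i hi).differentiable one_ne_zero x]
    exact Finset.sum_eq_zero fun i hi =>
      fderiv_eq_zero_of_support_subset (hUopen i hi) (hUconv i hi) (hsupp i hi) (hxU hi)
  have hlocal (i) (hi : i ∈ s) :
      EqOn (glDensity A b fun x => ∑ j ∈ s, f j x) (glDensity A b (f i)) (U i) := by
    refine fun x hx => glDensity_congr ?_
    filter_upwards [(hUopen i hi).mem_nhds hx] with y hy
    exact Finset.sum_eq_single_of_mem i hi fun j hj hji =>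
      hzero hj (disjoint_left.1 (hdisj hi hj hji.symm) hy)
  calc glEnergy A b Ω (fun x => ∑ i ∈ s, f i x)
      = ∫ x in ⋃ i ∈ s, U i, glDensity A b (fun x => ∑ i ∈ s, f i x) x :=
        setIntegral_eq_of_subset_of_forall_sdiff_eq_zero hΩ (iUnion₂_subset hUΩ) hoff
    _ = ∑ i ∈ s, ∫ x in U i, glDensity A b (fun x => ∑ i ∈ s, f i x) x :=
        integral_biUnion_finset s (fun i hi => (hUopen i hi).measurableSet) hdisj
          fun i hi => integrableOn_glDensity hA (hΩb.subset (hUΩ i hi)) (ContDiff.sum hf)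
    _ = ∑ i ∈ s, glEnergy A b (U i) (f i) :=
        Finset.sum_congr rfl fun i hi => setIntegral_congr_fun (hUopen i hi).measurableSet
          (hlocal i hi)

lemma continuous_A₀ : Continuous A₀ := by
  unfold A₀
  fun_prop

end Energy

section MagneticTranslation

/-- The magnetic translation of `v` by `c`. Its phase is linear with gradient
`A₀ c = A₀ x - A₀ (x - c)`, which gauges away the translation of the potential. -/
def magTranslate (c : ℝ × ℝ) (v : ℝ × ℝ → ℂ) (x : ℝ × ℝ) : ℂ :=
  Complex.exp ((((A₀ c).1 * x.1 + (A₀ c).2 * x.2 : ℝ) : ℂ) * Complex.I) * v (x - c)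

variable {v : ℝ × ℝ → ℂ}

lemma contDiff_magTranslate (c : ℝ × ℝ) (hv : ContDiff ℝ 1 v) :
    ContDiff ℝ 1 (magTranslate c v) := by
  have hphase : ContDiff ℝ 1 fun x : ℝ × ℝ => (((A₀ c).1 * x.1 + (A₀ c).2 * x.2 : ℝ) : ℂ) :=
    Complex.ofRealCLM.contDiff.comp
      (by fun_prop : ContDiff ℝ 1 fun x : ℝ × ℝ => (A₀ c).1 * x.1 + (A₀ c).2 * x.2)
  exact (hphase.mul contDiff_const).cexp.mul (hv.comp (contDiff_id.sub contDiff_const))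

lemma support_magTranslate (c : ℝ × ℝ) (v : ℝ × ℝ → ℂ) :
    Function.support (magTranslate c v) = (· - c) ⁻¹' Function.support v := by
  ext x
  simp [magTranslate]

lemma norm_magTranslate (c : ℝ × ℝ) (v : ℝ × ℝ → ℂ) (x : ℝ × ℝ) :
    ‖magTranslate c v x‖ = ‖v (x - c)‖ := by
  rw [magTranslate, norm_mul, Complex.norm_exp_ofReal_mul_I, one_mul]

lemma norm_magDeriv_magTranslate (c : ℝ × ℝ) {x : ℝ × ℝ} (hv : DifferentiableAt ℝ v (x - c))
    (e : ℝ × ℝ) : ‖magDeriv A₀ (magTranslate c v) x e‖ = ‖magDeriv A₀ v (x - c) e‖ := by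
  let φ : (ℝ × ℝ) →L[ℝ] ℝ := (A₀ c).1 • .fst ℝ ℝ ℝ + (A₀ c).2 • .snd ℝ ℝ ℝ
  have hphase := ((Complex.ofRealCLM.comp φ).hasFDerivAt (x := x)).mul_const Complex.I |>.cexp
  suffices magDeriv A₀ (magTranslate c v) x e =
      Complex.exp ((φ x : ℂ) * Complex.I) * magDeriv A₀ v (x - c) e by
    rw [this, norm_mul, Complex.norm_exp_ofReal_mul_I, one_mul]
  have hshift : DifferentiableAt ℝ (fun y => v (y - c)) x :=
    (differentiableAt_comp_sub c).2 hv
  refine (magDeriv_mul hphase.differentiableAt hshift e).trans ?_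
  rw [hphase.fderiv]
  simp [magDeriv, fderiv_comp_sub, φ, A₀]
  ring

lemma glDensity_magTranslate (b : ℝ) (c : ℝ × ℝ) {x : ℝ × ℝ}
    (hv : DifferentiableAt ℝ v (x - c)) :
    glDensity A₀ b (magTranslate c v) x = glDensity A₀ b v (x - c) := by
  simp only [glDensity, magGradSq_eq, norm_magDeriv_magTranslate c hv, norm_magTranslate]

lemma glEnergy_magTranslate (b : ℝ) (c : ℝ × ℝ) (Ω : Set (ℝ × ℝ)) (hv : Differentiable ℝ v) :
    glEnergy A₀ b ((· - c) ⁻¹' Ω) (magTranslate c v) = glEnergy A₀ b Ω v := by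
  simp only [glEnergy, glDensity_magTranslate b c (hv _)]
  exact (measurePreserving_sub_right volume c).setIntegral_preimage_emb
    (measurableEmbedding_subRight c) _ _

end MagneticTranslation

section Tiling

/-- The abscissae of the centres of `N` consecutive intervals of length `r` that tile
`(-N r / 2, N r / 2)`, indexed by `k < N`. -/
def gridCoord (N : ℕ) (r : ℝ) (k : ℕ) : ℝ := (k - (N - 1) / 2) * r

/-- The centres of the `N²` squares of side `r` that tile `Qsq (N * r)`. -/
def gridPoint (N : ℕ) (r : ℝ) (k : ℕ × ℕ) : ℝ × ℝ := (gridCoord N r k.1, gridCoord N r k.2)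

/-- The translate of `Qsq r` centred at `gridPoint N r k`. -/
def gridTile (N : ℕ) (r : ℝ) (k : ℕ × ℕ) : Set (ℝ × ℝ) := (· - gridPoint N r k) ⁻¹' Qsq r

variable {N : ℕ} {r : ℝ}

lemma mem_Ioo_of_sub_gridCoord_mem {k : ℕ} (hk : k < N) {t : ℝ}
    (ht : t - gridCoord N r k ∈ Ioo (-r / 2) (r / 2)) :
    t ∈ Ioo (-(N * r) / 2) (N * r / 2) := by
  obtain ⟨hlower, hupper⟩ := ht
  have hr : 0 < r := by linarith
  have hk' : (k : ℝ) + 1 ≤ N := by exact_mod_cast hk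
  have hleft : 0 ≤ k * r := by positivity
  have hright : (k + 1) * r ≤ N * r := by gcongr
  unfold gridCoord at hlower hupper
  constructor <;> linarith

lemma eq_of_sub_gridCoord_mem {j k : ℕ} {t : ℝ}
    (hj : t - gridCoord N r j ∈ Ioo (-r / 2) (r / 2))
    (hk : t - gridCoord N r k ∈ Ioo (-r / 2) (r / 2)) : j = k := by
  by_contra! hne
  wlog hlt : j < k generalizing j k
  · exact this hk hj hne.symm (hne.lt_or_gt.resolve_left hlt)
  have hr : 0 < r := by linarith [hj.1, hj.2]
  have hstep : ((j : ℝ) + 1) * r ≤ k * r := by gcongr; exact_mod_cast hlt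
  have hupper := hj.2
  have hlower := hk.1
  unfold gridCoord at hupper hlower
  linarith

lemma gridTile_subset {k : ℕ × ℕ} (hk : k ∈ Finset.range N ×ˢ Finset.range N) :
    gridTile N r k ⊆ Qsq (N * r) := by
  rw [Finset.mem_product, Finset.mem_range, Finset.mem_range] at hk
  exact fun x hx => ⟨mem_Ioo_of_sub_gridCoord_mem hk.1 hx.1, mem_Ioo_of_sub_gridCoord_mem hk.2 hx.2⟩

lemma pairwise_disjoint_gridTile (N : ℕ) (r : ℝ) :
    Pairwise (Function.onFun Disjoint (gridTile N r)) := fun _ _ hne =>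
  disjoint_left.2 fun _ hj hk =>
    hne (Prod.ext (eq_of_sub_gridCoord_mem hj.1 hk.1) (eq_of_sub_gridCoord_mem hj.2 hk.2))

lemma isOpen_gridTile (N : ℕ) (r : ℝ) (k : ℕ × ℕ) : IsOpen (gridTile N r k) :=
  (isOpen_Qsq r).preimage (continuous_sub_right _)

lemma convex_gridTile (N : ℕ) (r : ℝ) (k : ℕ × ℕ) : Convex ℝ (gridTile N r k) := by
  simpa only [gridTile, sub_eq_add_neg] using (convex_Qsq r).translate_preimage_left _

end Tiling

section DirichletEnergy

variable {b r : ℝ} {u v : ℝ × ℝ → ℂ}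

lemma memH10sq_of_support_subset (hu : ContDiff ℝ 1 u) (hsupp : Function.support u ⊆ Qsq r) :
    MemH10sq r u := by
  refine ⟨hu, fun x hx => Function.notMem_support.1 fun h => ?_⟩
  exact disjoint_left.1 (disjoint_frontier_iff_isOpen.2 (isOpen_Qsq r)) hx (hsupp h)

lemma eD_le_Fsq (hb : 0 ≤ b) (hu : MemH10sq r u) : eD b r ≤ Fsq b r u :=
  csInf_le ⟨-(volume.real (Qsq r)) / 2, forall_mem_image.2 fun _ _ =>
    neg_half_volume_le_glEnergy hb (isBounded_Qsq r).measure_lt_top.ne⟩ (mem_image_of_mem _ hu)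

lemma eD_natCast_mul_le (hb : 0 ≤ b) (hv : ContDiff ℝ 1 v) (hsupp : Function.support v ⊆ Qsq r)
    (N : ℕ) : eD b (N * r) ≤ N ^ 2 * Fsq b r v := by
  set s := Finset.range N ×ˢ Finset.range N
  set f : ℕ × ℕ → ℝ × ℝ → ℂ := fun k => magTranslate (gridPoint N r k) v
  have hf (k) (_ : k ∈ s) : ContDiff ℝ 1 (f k) := contDiff_magTranslate _ hv
  have hfsupp (k) (_ : k ∈ s) : Function.support (f k) ⊆ gridTile N r k := by
    rw [support_magTranslate]
    exact preimage_mono hsupp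
  have hsum : Function.support (fun x => ∑ k ∈ s, f k x) ⊆ Qsq (N * r) :=
    (Finset.support_sum s f).trans
      (iUnion₂_subset fun k hk => (hfsupp k hk).trans (gridTile_subset hk))
  calc eD b (N * r) ≤ Fsq b (N * r) fun x => ∑ k ∈ s, f k x :=
        eD_le_Fsq hb (memH10sq_of_support_subset (ContDiff.sum hf) hsum)
    _ = ∑ k ∈ s, glEnergy A₀ b (gridTile N r k) (f k) :=
        glEnergy_sum continuous_A₀ (isOpen_Qsq _).measurableSet (isBounded_Qsq _)
          (fun k _ => isOpen_gridTile N r k) (fun k _ => convex_gridTile N r k)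
          (fun _ => gridTile_subset) (fun _ _ _ _ hne => pairwise_disjoint_gridTile N r hne)
          hf hfsupp
    _ = ∑ _k ∈ s, Fsq b r v := Finset.sum_congr rfl fun k _ =>
        glEnergy_magTranslate b _ _ (hv.differentiable one_ne_zero)
    _ = N ^ 2 * Fsq b r v := by
        rw [Finset.sum_const, Finset.card_product, Finset.card_range, nsmul_eq_mul]
        push_cast
        ring

lemma IsLimitG.mul_sq_le_Fsq {g : ℝ → ℝ} (hg : IsLimitG g) (hb : 0 < b) (hr : 0 < r)
    (hv : ContDiff ℝ 1 v) (hsupp : Function.support v ⊆ Qsq r) : g b * r ^ 2 ≤ Fsq b r v := by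
  have hside : Tendsto (fun N : ℕ => (N : ℝ) * r) atTop atTop :=
    tendsto_natCast_atTop_atTop.atTop_mul_const hr
  rw [← le_div_iff₀ (by positivity)]
  refine le_of_tendsto ((hg b hb).comp hside) ?_
  filter_upwards [eventually_gt_atTop 0] with N hN
  calc eD b (N * r) / (N * r) ^ 2
      ≤ N ^ 2 * Fsq b r v / (N * r) ^ 2 := by gcongr; exact eD_natCast_mul_le hb.le hv hsupp N
    _ = Fsq b r v / r ^ 2 := by field_simp

end DirichletEnergy

section Cutoff

/-- `u` multiplied by the cut-off function `1 - ρ⁴`, where `ρ` is `0` in the bulk and `1` outside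
the domain. -/
def cutoff (ρ : ℝ × ℝ → ℝ) (u : ℝ × ℝ → ℂ) (x : ℝ × ℝ) : ℂ := ((1 - ρ x ^ 4 : ℝ) : ℂ) * u x

variable {A : ℝ × ℝ → ℝ × ℝ} {ρ : ℝ × ℝ → ℝ} {u : ℝ × ℝ → ℂ} {x : ℝ × ℝ} {b κ : ℝ}

lemma contDiff_cutoff (hρ : ContDiff ℝ 1 ρ) (hu : ContDiff ℝ 1 u) : ContDiff ℝ 1 (cutoff ρ u) :=
  (Complex.ofRealCLM.contDiff.comp (contDiff_const.sub (hρ.pow 4))).mul hu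

lemma support_cutoff_subset {Ω : Set (ℝ × ℝ)} (hρ : ∀ x ∉ Ω, ρ x = 1) :
    Function.support (cutoff ρ u) ⊆ Ω := by
  intro x hx
  by_contra hxΩ
  exact hx (by simp [cutoff, hρ x hxΩ])

lemma norm_cutoff (hρx : ρ x ∈ Icc 0 1) : ‖cutoff ρ u x‖ = (1 - ρ x ^ 4) * ‖u x‖ := by
  rw [cutoff, norm_mul, Complex.norm_real, Real.norm_of_nonneg]
  exact sub_nonneg.2 (pow_le_one₀ hρx.1 hρx.2)

lemma magDeriv_cutoff (hρ : DifferentiableAt ℝ ρ x) (hu : DifferentiableAt ℝ u x) (e : ℝ × ℝ) :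
    magDeriv A (cutoff ρ u) x e =
      ((1 - ρ x ^ 4 : ℝ) : ℂ) * magDeriv A u x e -
        ((4 * ρ x ^ 3 * fderiv ℝ ρ x e : ℝ) : ℂ) * u x := by
  have hfactor := Complex.ofRealCLM.hasFDerivAt.comp x ((hρ.hasFDerivAt.pow 4).const_sub 1)
  refine (magDeriv_mul hfactor.differentiableAt hu e).trans ?_
  rw [hfactor.fderiv]
  simp
  ring

lemma norm_sq_sub_mul_le {z w : ℂ} {t d : ℝ} (ht : t ∈ Icc 0 1) (hd : |d| ≤ κ) :
    ‖((1 - t ^ 4 : ℝ) : ℂ) * z - ((4 * t ^ 3 * d : ℝ) : ℂ) * w‖ ^ 2 ≤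
      ‖z‖ ^ 2 + 16 * κ ^ 2 * t ^ 2 * ‖w‖ ^ 2 := by
  obtain ⟨ht0, ht1⟩ := ht
  have ht4 : 0 ≤ 1 - t ^ 4 := sub_nonneg.2 (pow_le_one₀ ht0 ht1)
  have hnorm : ‖((1 - t ^ 4 : ℝ) : ℂ) * z - ((4 * t ^ 3 * d : ℝ) : ℂ) * w‖ ≤
      (1 - t ^ 4) * ‖z‖ + 4 * t ^ 3 * (κ * ‖w‖) := by
    refine (norm_sub_le _ _).trans ?_
    rw [norm_mul, norm_mul, Complex.norm_real, Complex.norm_real, Real.norm_of_nonneg ht4,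
      Real.norm_eq_abs, abs_mul, abs_of_nonneg (by positivity : 0 ≤ 4 * t ^ 3), mul_assoc _ |d|]
    gcongr
  -- Convexity of the square, with weights `1 - t⁴` and `t⁴` at the points `‖z‖` and `4κ‖w‖/t`.
  have hconvex : ((1 - t ^ 4) * ‖z‖ + 4 * t ^ 3 * (κ * ‖w‖)) ^ 2 ≤
      (1 - t ^ 4) * ‖z‖ ^ 2 + 16 * t ^ 2 * (κ * ‖w‖) ^ 2 := by
    linarith [mul_nonneg ht4 (sq_nonneg (t ^ 2 * ‖z‖ - 4 * t * (κ * ‖w‖)))]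
  have hdrop : 0 ≤ t ^ 4 * ‖z‖ ^ 2 := by positivity
  calc _ ≤ ((1 - t ^ 4) * ‖z‖ + 4 * t ^ 3 * (κ * ‖w‖)) ^ 2 := by gcongr
    _ ≤ _ := by linarith

lemma magGradSq_cutoff_le (hρ : DifferentiableAt ℝ ρ x) (hu : DifferentiableAt ℝ u x)
    (hρx : ρ x ∈ Icc 0 1) (hκ : ‖fderiv ℝ ρ x‖ ≤ κ) :
    magGradSq A (cutoff ρ u) x ≤ magGradSq A u x + 32 * κ ^ 2 * ρ x ^ 2 * ‖u x‖ ^ 2 := by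
  have hbound {e : ℝ × ℝ} (he : ‖e‖ = 1) : ‖magDeriv A (cutoff ρ u) x e‖ ^ 2 ≤
      ‖magDeriv A u x e‖ ^ 2 + 16 * κ ^ 2 * ρ x ^ 2 * ‖u x‖ ^ 2 := by
    rw [magDeriv_cutoff hρ hu]
    exact norm_sq_sub_mul_le hρx (((fderiv ℝ ρ x).le_of_opNorm_le hκ e).trans_eq (by simp [he]))
  rw [magGradSq_eq, magGradSq_eq]
  linarith [hbound (e := (1, 0)) (by simp), hbound (e := (0, 1)) (by simp)]

lemma cutoff_potential_le {t y : ℝ} (M : ℝ) (ht : t ∈ Icc 0 1) (hy : 0 ≤ y) :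
    M * t ^ 2 * y - (1 - t ^ 4) ^ 2 * y + (1 - t ^ 4) ^ 4 * y ^ 2 / 2 ≤
      -y + y ^ 2 / 2 + (M + 2) ^ 2 / 2 := by
  have ht4 : 0 ≤ 1 - t ^ 4 := sub_nonneg.2 (pow_le_one₀ ht.1 ht.2)
  have hmass : (1 - (1 - t ^ 4) ^ 2) * y ≤ 2 * t ^ 2 * y := by
    have : t ^ 4 ≤ t ^ 2 := pow_le_pow_of_le_one ht.1 ht.2 (by norm_num)
    gcongr
    linarith [sq_nonneg (t ^ 4)]
  have hquartic : (1 - t ^ 4) ^ 4 * y ^ 2 ≤ (1 - t ^ 4) * y ^ 2 := by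
    gcongr
    exact pow_le_of_le_one ht4 (sub_le_self _ (by positivity)) (by norm_num)
  linarith [sq_nonneg (t ^ 2 * y - (M + 2))]

lemma glDensity_cutoff_le (hb : 0 ≤ b) (hρ : DifferentiableAt ℝ ρ x)
    (hu : DifferentiableAt ℝ u x) (hρx : ρ x ∈ Icc 0 1) (hκ : ‖fderiv ℝ ρ x‖ ≤ κ) :
    glDensity A b (cutoff ρ u) x ≤ glDensity A b u x + (32 * b * κ ^ 2 + 2) ^ 2 / 2 := by
  have hgrad := mul_le_mul_of_nonneg_left (magGradSq_cutoff_le (A := A) hρ hu hρx hκ) hb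
  have hpot := cutoff_potential_le (32 * b * κ ^ 2) hρx (sq_nonneg ‖u x‖)
  rw [glDensity, glDensity, norm_cutoff hρx]
  linarith

lemma glDensity_cutoff_of_eq_zero (hρ : DifferentiableAt ℝ ρ x)
    (hu : DifferentiableAt ℝ u x) (hρx : ρ x = 0) :
    glDensity A b (cutoff ρ u) x = glDensity A b u x := by
  simp [glDensity, magGradSq_eq, magDeriv_cutoff hρ hu, cutoff, hρx]

lemma glEnergy_cutoff_le {Ω : Set (ℝ × ℝ)} (hA : Continuous A)
    (hΩ : Bornology.IsBounded Ω) (hb : 0 ≤ b) (hρ : ContDiff ℝ 1 ρ) (hρ01 : ∀ x, ρ x ∈ Icc 0 1)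
    (hκ : ∀ x, ‖fderiv ℝ ρ x‖ ≤ κ) (hu : ContDiff ℝ 1 u) :
    glEnergy A b Ω (cutoff ρ u) ≤ glEnergy A b Ω u +
      (32 * b * κ ^ 2 + 2) ^ 2 / 2 * volume.real (Ω ∩ Function.support ρ) := by
  set M := (32 * b * κ ^ 2 + 2) ^ 2 / 2
  have hlayer : MeasurableSet (Function.support ρ) := hρ.continuous.isOpen_support.measurableSet
  have hdensity : IntegrableOn (glDensity A b u) Ω := integrableOn_glDensity hA hΩ hu
  have herror : IntegrableOn ((Function.support ρ).indicator fun _ => M) Ω :=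
    (integrableOn_const hΩ.measure_lt_top.ne).indicator hlayer
  calc glEnergy A b Ω (cutoff ρ u)
      ≤ ∫ x in Ω, (glDensity A b u x + (Function.support ρ).indicator (fun _ => M) x) := by
        refine setIntegral_mono (integrableOn_glDensity hA hΩ (contDiff_cutoff hρ hu))
          (hdensity.add herror) fun x => ?_
        have hρx := hρ.differentiable one_ne_zero x
        have hux := hu.differentiable one_ne_zero x
        by_cases hx : ρ x = 0
        · simp [glDensity_cutoff_of_eq_zero hρx hux hx, hx]
        · simpa [hx] using glDensity_cutoff_le hb hρx hux (hρ01 x) (hκ x)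
    _ = glEnergy A b Ω u + M * volume.real (Ω ∩ Function.support ρ) := by
        rw [integral_add hdensity herror, setIntegral_indicator hlayer, setIntegral_const,
          smul_eq_mul, mul_comm M]
        rfl

end Cutoff

section BoundaryLayer

/-- A function of one variable that vanishes on `[-(r/2 - l), r/2 - l]` and is at least `1` outside
`(-r/2, r/2)`. -/
def edgeRamp (r l t : ℝ) : ℝ :=
  Real.smoothTransition ((t - r / 2) / l + 1) + Real.smoothTransition ((-t - r / 2) / l + 1)

/-- A smooth function that vanishes on `Qsq (r - 2 * l)` and equals `1` outside `Qsq r`. The outer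
transition flattens the values above `1` of the sum of the two ramps. -/
def layerFun (r l : ℝ) (x : ℝ × ℝ) : ℝ :=
  Real.smoothTransition (edgeRamp r l x.1 + edgeRamp r l x.2)

variable {r l : ℝ}

lemma edgeRamp_nonneg (r l t : ℝ) : 0 ≤ edgeRamp r l t :=
  add_nonneg (Real.smoothTransition.nonneg _) (Real.smoothTransition.nonneg _)

lemma one_le_edgeRamp (hl : 0 < l) {t : ℝ} (ht : t ∉ Ioo (-r / 2) (r / 2)) :
    1 ≤ edgeRamp r l t := by
  obtain h | h : t ≤ -r / 2 ∨ r / 2 ≤ t := by simpa only [mem_Ioo, not_and_or, not_lt] using ht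
  · have : 0 ≤ (-t - r / 2) / l := div_nonneg (by linarith) hl.le
    refine le_add_of_nonneg_of_le (Real.smoothTransition.nonneg _) ?_
    rw [Real.smoothTransition.one_of_one_le (by linarith)]
  · have : 0 ≤ (t - r / 2) / l := div_nonneg (by linarith) hl.le
    refine le_add_of_le_of_nonneg ?_ (Real.smoothTransition.nonneg _)
    rw [Real.smoothTransition.one_of_one_le (by linarith)]

lemma edgeRamp_eq_zero (hl : 0 < l) {t : ℝ}
    (ht : t ∈ Ioo (-(r - 2 * l) / 2) ((r - 2 * l) / 2)) : edgeRamp r l t = 0 := by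
  have hright : (t - r / 2) / l ≤ -1 := by rw [div_le_iff₀ hl]; linarith [ht.2]
  have hleft : (-t - r / 2) / l ≤ -1 := by rw [div_le_iff₀ hl]; linarith [ht.1]
  rw [edgeRamp, Real.smoothTransition.zero_of_nonpos (by linarith),
    Real.smoothTransition.zero_of_nonpos (by linarith), add_zero]

lemma layerFun_eq_one (hl : 0 < l) {x : ℝ × ℝ} (hx : x ∉ Qsq r) : layerFun r l x = 1 := by
  refine Real.smoothTransition.one_of_one_le ?_
  obtain h | h := not_and_or.1 hx
  · exact le_add_of_le_of_nonneg (one_le_edgeRamp hl h) (edgeRamp_nonneg r l _)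
  · exact le_add_of_nonneg_of_le (edgeRamp_nonneg r l _) (one_le_edgeRamp hl h)

lemma layerFun_eq_zero (hl : 0 < l) {x : ℝ × ℝ} (hx : x ∈ Qsq (r - 2 * l)) :
    layerFun r l x = 0 := by
  rw [layerFun, edgeRamp_eq_zero hl hx.1, edgeRamp_eq_zero hl hx.2, add_zero,
    Real.smoothTransition.zero]

lemma layerFun_mem_Icc (r l : ℝ) (x : ℝ × ℝ) : layerFun r l x ∈ Icc 0 1 :=
  ⟨Real.smoothTransition.nonneg _, Real.smoothTransition.le_one _⟩

lemma contDiff_layerFun (r l : ℝ) : ContDiff ℝ 1 (layerFun r l) := by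
  unfold layerFun edgeRamp
  fun_prop

lemma abs_edgeRamp_sub_le {K : NNReal} (hK : LipschitzWith K Real.smoothTransition) (hl : 0 < l)
    (r s t : ℝ) : |edgeRamp r l s - edgeRamp r l t| ≤ 2 * K / l * |s - t| := by
  have hright := hK.dist_le_mul ((s - r / 2) / l + 1) ((t - r / 2) / l + 1)
  have hleft := hK.dist_le_mul ((-s - r / 2) / l + 1) ((-t - r / 2) / l + 1)
  rw [Real.dist_eq, Real.dist_eq, add_sub_add_right_eq_sub, ← sub_div, sub_sub_sub_cancel_right,
    abs_div, abs_of_pos hl] at hright hleft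
  rw [neg_sub_neg, abs_sub_comm t s] at hleft
  calc |edgeRamp r l s - edgeRamp r l t|
      ≤ K * (|s - t| / l) + K * (|s - t| / l) := by
        rw [edgeRamp, edgeRamp, add_sub_add_comm]
        exact (abs_add_le _ _).trans (add_le_add hright hleft)
    _ = 2 * K / l * |s - t| := by ring

lemma exists_norm_fderiv_layerFun_le :
    ∃ K : ℝ, ∀ r l x, 0 < l → ‖fderiv ℝ (layerFun r l) x‖ ≤ K / l := by
  obtain ⟨K, hK⟩ := exists_lipschitzWith_smoothTransition
  refine ⟨4 * K ^ 2, fun r l x hl => norm_fderiv_le_of_lip' ℝ (by positivity)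
    (Eventually.of_forall fun y => ?_)⟩
  have hfst : |y.1 - x.1| ≤ ‖y - x‖ := norm_fst_le (y - x)
  have hsnd : |y.2 - x.2| ≤ ‖y - x‖ := norm_snd_le (y - x)
  calc ‖layerFun r l y - layerFun r l x‖
      ≤ K * |edgeRamp r l y.1 + edgeRamp r l y.2 - (edgeRamp r l x.1 + edgeRamp r l x.2)| :=
        hK.dist_le_mul _ _
    _ ≤ K * (2 * K / l * |y.1 - x.1| + 2 * K / l * |y.2 - x.2|) := by
        rw [add_sub_add_comm]
        gcongr
        exact (abs_add_le _ _).trans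
          (add_le_add (abs_edgeRamp_sub_le hK hl r _ _) (abs_edgeRamp_sub_le hK hl r _ _))
    _ ≤ K * (2 * K / l * ‖y - x‖ + 2 * K / l * ‖y - x‖) := by gcongr
    _ = 4 * K ^ 2 / l * ‖y - x‖ := by ring

lemma volume_real_Qsq_inter_support_layerFun_le (hr : 0 ≤ r) (hl : 0 < l) :
    volume.real (Qsq r ∩ Function.support (layerFun r l)) ≤ 4 * l * r := by
  have hsub : Qsq r ∩ Function.support (layerFun r l) ⊆ Qsq r \ Qsq (r - 2 * l) :=
    fun _ hx => ⟨hx.1, fun hmem => hx.2 (layerFun_eq_zero hl hmem)⟩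
  have hfinite : volume (Qsq r \ Qsq (r - 2 * l)) ≠ ⊤ :=
    ((isBounded_Qsq r).subset sdiff_subset).measure_lt_top.ne
  exact (measureReal_mono hsub hfinite).trans (volume_real_Qsq_diff_le hr hl.le)

end BoundaryLayer

section Comparison

lemma exists_Fsq_cutoff_le : ∃ C > 0, ∀ {b r : ℝ}, 0 < b → 0 ≤ r → ∀ {u : ℝ × ℝ → ℂ},
    MemH1sq u → ∃ v, ContDiff ℝ 1 v ∧ Function.support v ⊆ Qsq r ∧
      Fsq b r v ≤ Fsq b r u + C * √b * r := by
  obtain ⟨K, hK⟩ := exists_norm_fderiv_layerFun_le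
  refine ⟨2 * (32 * K ^ 2 + 2) ^ 2, by positivity, fun {b r} hb hr u hu => ?_⟩
  have hl : 0 < √b := Real.sqrt_pos.2 hb
  have hscale : 32 * b * (K / √b) ^ 2 = 32 * K ^ 2 := by
    rw [div_pow, Real.sq_sqrt hb.le]
    field_simp
  refine ⟨cutoff (layerFun r √b) u, contDiff_cutoff (contDiff_layerFun r _) hu,
    support_cutoff_subset fun _ => layerFun_eq_one hl, ?_⟩
  calc Fsq b r (cutoff (layerFun r √b) u)
      ≤ Fsq b r u + (32 * b * (K / √b) ^ 2 + 2) ^ 2 / 2 *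
          volume.real (Qsq r ∩ Function.support (layerFun r √b)) :=
        glEnergy_cutoff_le continuous_A₀ (isBounded_Qsq r) hb.le (contDiff_layerFun r _)
          (layerFun_mem_Icc r _) (fun x => hK r _ x hl) hu
    _ ≤ Fsq b r u + (32 * K ^ 2 + 2) ^ 2 / 2 * (4 * √b * r) := by
        rw [hscale]
        gcongr
        exact volume_real_Qsq_inter_support_layerFun_le hr hl
    _ = Fsq b r u + 2 * (32 * K ^ 2 + 2) ^ 2 * √b * r := by ring

theorem eN_estimate_general : ∃ C > (0 : ℝ), ∀ g : ℝ → ℝ, IsLimitG g → ∀ b : ℝ, 0 < b →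
    ∀ r : ℝ, 0 < r → eN b r / r ^ 2 ≥ g b - C * √b / r := by
  obtain ⟨C, hC, hcutoff⟩ := exists_Fsq_cutoff_le
  refine ⟨C, hC, fun g hg b hb r hr => ?_⟩
  have hlower : g b * r ^ 2 - C * √b * r ≤ eN b r := by
    refine le_csInf ⟨_, mem_image_of_mem _ (contDiff_zero_fun : MemH1sq fun _ => 0)⟩
      (forall_mem_image.2 ?_)
    intro u hu
    obtain ⟨v, hv, hsupp, hle⟩ := hcutoff hb hr.le hu
    linarith [hg.mul_sq_le_Fsq hb hr hv hsupp]
  rw [ge_iff_le, le_div_iff₀ (by positivity)]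
  calc (g b - C * √b / r) * r ^ 2 = g b * r ^ 2 - C * √b * r := by field_simp
    _ ≤ eN b r := hlower

end Comparison

/-- `e_N(b,r)/r² ≥ g(b) - C √b / r` for all `b > 0`, `r ≥ 1`. -/
theorem eN_estimate (g : ℝ → ℝ) (hg : IsLimitG g) :
    ∃ C > (0:ℝ), ∀ b : ℝ, 0 < b → ∀ r : ℝ, 1 ≤ r →
      eN b r / r ^ 2 ≥ g b - C * Real.sqrt b / r := by
  obtain ⟨C, hC, hbound⟩ := eN_estimate_general
  exact ⟨C, hC, fun b hb r hr => hbound g hg b hb r (by linarith)⟩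

end
end

section
/- There exists a constant C>0 such that, for all L>0 and R>0, any minimizer φ of e_gs(L;R) satisfies ∫_{S_R} |φ(x)|² dx ≤ C L^{-2/3} R. -/
open MeasureTheory Real Set Filter Topology

noncomputable section

/-!
Fourier series in `x₁` turn the magnetic gradient for `Avan` into the Montgomery operators
`-d²/dx² + (k + x² / 2)²`. For each `k`, the derivative of `sin (arctan x) (k + x² / 2 + 1/2) |v|²`
integrates to zero, and completing squares in it gives
`∫ |x| |v|² ≤ 8 ∫ (|v'|² + (k + x² / 2)² |v|²)` with a constant independent of `k`. Summing over the
Fourier modes by Parseval, `∫ |x₂| |u|² ≤ 8 ∫ |(∇ - iA)u|²`.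

With `κ = L ^ (-2/3)` and `M = ∫ |u|²`, nonpositive energy forces `∫ |(∇ - iA)u|² ≤ κ M` and
`∫ |u|⁴ ≤ 2 M`. Hence at least half of the mass lies in the band `|x₂| < 16 κ`, of area `32 κ R`,
and there the quartic term bounds the mass by a multiple of the area. A minimizer has nonpositive
energy because `0` is a competitor.
-/

section L2

variable {α E : Type*} [MeasurableSpace α] {μ : Measure α}

lemma memLp_two_iff_lintegral_enorm_sq_lt_top [NormedAddCommGroup E] {f : α → E}
    (hf : AEStronglyMeasurable f μ) : MemLp f 2 μ ↔ ∫⁻ x, ‖f x‖ₑ ^ 2 ∂μ < ⊤ := by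
  rw [MemLp, and_iff_right hf,
    eLpNorm_lt_top_iff_lintegral_rpow_enorm_lt_top two_ne_zero ENNReal.ofNat_ne_top]
  simp

lemma integrable_inner_of_memLp_two [NormedAddCommGroup E] [InnerProductSpace ℝ E] {f g : α → E}
    (hf : MemLp f 2 μ) (hg : MemLp g 2 μ) : Integrable (fun x ↦ inner ℝ (f x) (g x)) μ := by
  refine (L2.integrable_inner (𝕜 := ℝ) hf.toLp hg.toLp).congr ?_
  filter_upwards [hf.coeFn_toLp, hg.coeFn_toLp] with x hfx hgx
  rw [hfx, hgx]

lemma ofReal_norm_sq [NormedAddCommGroup E] (z : E) : ENNReal.ofReal (‖z‖ ^ 2) = ‖z‖ₑ ^ 2 := by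
  rw [ENNReal.ofReal_pow (norm_nonneg z), ofReal_norm]

/-- Chebyshev controls the mass where `t ≤ ρ`; Young's inequality `s² ≤ s⁴ / 8 + 2` controls the
rest. -/
lemma integral_norm_sq_le_of_integral_mul_norm_sq_le [NormedAddCommGroup E] {f : α → E} {ρ : α → ℝ}
    {t : ℝ} (ht : 0 < t) (hρ : Measurable ρ) (hρ₀ : 0 ≤ ρ) (hfin : μ {x | ρ x < t} ≠ ⊤)
    (hf₂ : Integrable (fun x ↦ ‖f x‖ ^ 2) μ) (hf₄ : Integrable (fun x ↦ ‖f x‖ ^ 4) μ)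
    (hρf : Integrable (fun x ↦ ρ x * ‖f x‖ ^ 2) μ)
    (hρ_le : ∫ x, ρ x * ‖f x‖ ^ 2 ∂μ ≤ t / 2 * ∫ x, ‖f x‖ ^ 2 ∂μ)
    (h₄_le : ∫ x, ‖f x‖ ^ 4 ∂μ ≤ 2 * ∫ x, ‖f x‖ ^ 2 ∂μ) :
    ∫ x, ‖f x‖ ^ 2 ∂μ ≤ 8 * μ.real {x | ρ x < t} := by
  set B : Set α := {x | ρ x < t}
  have hB : MeasurableSet B := measurableSet_lt hρ measurable_const
  have hB_int : Integrable (B.indicator fun _ ↦ (2 : ℝ)) μ :=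
    (integrable_indicator_iff hB).2 (integrableOn_const hfin)
  have hpt : ∀ x, ‖f x‖ ^ 2 ≤ t⁻¹ * (ρ x * ‖f x‖ ^ 2) + 1 / 8 * ‖f x‖ ^ 4
      + B.indicator (fun _ ↦ (2 : ℝ)) x := by
    intro x
    have hρf_nonneg : 0 ≤ t⁻¹ * (ρ x * ‖f x‖ ^ 2) :=
      mul_nonneg (inv_pos.2 ht).le (mul_nonneg (hρ₀ x) (sq_nonneg _))
    by_cases hx : x ∈ B
    · rw [indicator_of_mem hx]
      nlinarith [sq_nonneg (‖f x‖ ^ 2 - 4)]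
    · rw [indicator_of_notMem hx]
      have hchebyshev : ‖f x‖ ^ 2 ≤ t⁻¹ * (ρ x * ‖f x‖ ^ 2) := by
        rw [← mul_assoc, ← div_eq_inv_mul]
        exact le_mul_of_one_le_left (sq_nonneg _) ((one_le_div ht).2 (not_lt.1 hx))
      have hf₄_nonneg : 0 ≤ ‖f x‖ ^ 4 := by positivity
      linarith
  have hint : ∫ x, ‖f x‖ ^ 2 ∂μ ≤ t⁻¹ * ∫ x, ρ x * ‖f x‖ ^ 2 ∂μ + 1 / 8 * ∫ x, ‖f x‖ ^ 4 ∂μ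
      + 2 * μ.real B := by
    calc ∫ x, ‖f x‖ ^ 2 ∂μ
        ≤ ∫ x, (t⁻¹ * (ρ x * ‖f x‖ ^ 2) + 1 / 8 * ‖f x‖ ^ 4
            + B.indicator (fun _ ↦ (2 : ℝ)) x) ∂μ :=
          integral_mono hf₂ (((hρf.const_mul _).add (hf₄.const_mul _)).add hB_int) hpt
      _ = _ := by
          rw [integral_add (by exact (hρf.const_mul _).add (hf₄.const_mul _)) hB_int,
            integral_add (hρf.const_mul _) (hf₄.const_mul _), integral_const_mul,
            integral_const_mul, integral_indicator_const _ hB, smul_eq_mul, mul_comm (μ.real B)]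
  have hweighted : t⁻¹ * ∫ x, ρ x * ‖f x‖ ^ 2 ∂μ ≤ 1 / 2 * ∫ x, ‖f x‖ ^ 2 ∂μ := by
    rw [inv_mul_le_iff₀ ht]
    linarith
  linarith

end L2

section OneDimensional

lemma sin_arctan_eq_mul_cos_arctan (x : ℝ) : sin (arctan x) = x * cos (arctan x) := by
  rw [sin_arctan, cos_arctan, mul_one_div]

lemma hasDerivAt_sin_arctan (x : ℝ) :
    HasDerivAt (fun x ↦ sin (arctan x)) (cos (arctan x) ^ 3) x := by
  refine (hasDerivAt_arctan x).sin.congr_deriv ?_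
  rw [← cos_sq_arctan]
  ring

lemma abs_le_cos_arctan_add_sin_arctan (x : ℝ) :
    |x| ≤ 4 * (cos (arctan x) ^ 3 / 4 + sin (arctan x) * x - sin (arctan x) ^ 2 / 2) := by
  have hsin := sin_arctan_eq_mul_cos_arctan x
  have hcos : 0 < cos (arctan x) := cos_arctan_pos x
  have hcos_le : cos (arctan x) ≤ 1 := cos_le_one _
  have hsq := sin_sq_add_cos_sq (arctan x)
  generalize cos (arctan x) = c, sin (arctan x) = w at *
  refine le_of_mul_le_mul_right ?_ hcos
  calc |x| * c = |w| := by rw [hsin, abs_mul, abs_of_pos hcos]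
    _ ≤ 1 + w ^ 4 := by
        nlinarith [sq_nonneg (w ^ 2 - 1 / 2), sq_nonneg (|w| - 1 / 2), sq_abs w]
    _ = c ^ 4 + 4 * w ^ 2 - 2 * w ^ 2 := by linear_combination (w ^ 2 - c ^ 2 - 1) * hsq
    _ ≤ c ^ 4 + 4 * w ^ 2 - 2 * w ^ 2 * c := by
        linarith [mul_le_of_le_one_right (mul_nonneg zero_le_two (sq_nonneg w)) hcos_le]
    _ = 4 * (c ^ 3 / 4 + w * x - w ^ 2 / 2) * c := by linear_combination 4 * w * hsin

variable {E : Type*} [NormedAddCommGroup E] [InnerProductSpace ℝ E] {k : ℝ} {v v' : ℝ → E}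

/-- The function whose derivative is integrated in the virial argument for the Montgomery operator
`-d²/dx² + (k + x² / 2)²`. The factor `sin (arctan x) = x / √(1 + x²)` is a bounded smooth sign, and
the shift by `1 / 2` makes the derivative of this factor contribute a positive mass near `0`. -/
def virialFlux (k : ℝ) (v : ℝ → E) (x : ℝ) : ℝ :=
  sin (arctan x) * ((k + x ^ 2 / 2 + 1 / 2) * ‖v x‖ ^ 2)

/-- The derivative of `virialFlux k v`, where `v'` is the derivative of `v`. -/
def virialDensity (k : ℝ) (v v' : ℝ → E) (x : ℝ) : ℝ :=
  cos (arctan x) ^ 3 * ((k + x ^ 2 / 2 + 1 / 2) * ‖v x‖ ^ 2) +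
    sin (arctan x) *
      (x * ‖v x‖ ^ 2 + (k + x ^ 2 / 2 + 1 / 2) * (2 * inner ℝ (v x) (v' x)))

lemma hasDerivAt_virialFlux {x : ℝ} (hv : HasDerivAt v (v' x) x) :
    HasDerivAt (virialFlux k v) (virialDensity k v v' x) x := by
  have hmomentum : HasDerivAt (fun y : ℝ ↦ k + y ^ 2 / 2 + 1 / 2) x x := by
    refine (((((hasDerivAt_id x).pow 2).div_const 2).const_add k).add_const (1 / 2)).congr_deriv ?_
    simp
  exact (hasDerivAt_sin_arctan x).mul (hmomentum.mul hv.norm_sq)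

lemma abs_mul_norm_sq_le_virialDensity (x : ℝ) :
    |x| * ‖v x‖ ^ 2 ≤
      8 * (‖v' x‖ ^ 2 + (k + x ^ 2 / 2) ^ 2 * ‖v x‖ ^ 2) + 4 * virialDensity k v v' x := by
  have hweight := mul_le_mul_of_nonneg_right (abs_le_cos_arctan_add_sin_arctan x)
    (sq_nonneg ‖v x‖)
  have hsquare (θ : ℝ) :
      0 ≤ ‖v' x‖ ^ 2 + 2 * (θ * inner ℝ (v x) (v' x)) + θ ^ 2 * ‖v x‖ ^ 2 := by
    have h := norm_add_sq_real (v' x) (θ • v x)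
    rw [real_inner_smul_right, real_inner_comm, norm_smul, mul_pow, norm_eq_abs, sq_abs] at h
    exact h ▸ sq_nonneg _
  have hd₀ : 0 ≤ cos (arctan x) ^ 3 := pow_nonneg (cos_arctan_pos x).le 3
  have hd₁ : cos (arctan x) ^ 3 ≤ 1 := pow_le_one₀ (cos_arctan_pos x).le (cos_le_one _)
  have hw₁ : sin (arctan x) ^ 2 ≤ 1 := sin_sq_le_one _
  rw [virialDensity]
  set w := sin (arctan x)
  set d := cos (arctan x) ^ 3
  set a := k + x ^ 2 / 2
  have hremainder : 0 ≤ (d * (a + 1 / 2) ^ 2 + (2 - w ^ 2 - d) * a ^ 2) * ‖v x‖ ^ 2 :=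
    mul_nonneg (add_nonneg (mul_nonneg hd₀ (sq_nonneg _))
      (mul_nonneg (by linarith) (sq_nonneg _))) (sq_nonneg _)
  linarith [hsquare w, hsquare (w * a), sq_nonneg ‖v' x‖]

lemma integrable_add_half_mul_norm_sq (hv : MemLp v 2)
    (hav : MemLp (fun x ↦ (k + x ^ 2 / 2) • v x) 2) :
    Integrable fun x ↦ (k + x ^ 2 / 2 + 1 / 2) * ‖v x‖ ^ 2 := by
  refine ((integrable_inner_of_memLp_two hav hv).add
    ((integrable_inner_of_memLp_two hv hv).const_mul (1 / 2))).congr (ae_of_all _ fun x ↦ ?_)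
  simp only [Pi.add_apply, real_inner_smul_left, real_inner_self_eq_norm_sq]
  ring

lemma integrable_virialFlux (hv : MemLp v 2) (hav : MemLp (fun x ↦ (k + x ^ 2 / 2) • v x) 2) :
    Integrable (virialFlux k v) :=
  (integrable_add_half_mul_norm_sq hv hav).bdd_mul (c := 1) (by fun_prop)
    (ae_of_all _ fun x ↦ abs_sin_le_one _)

lemma integrable_id_mul_norm_sq (hv : MemLp v 2)
    (hav : MemLp (fun x ↦ (k + x ^ 2 / 2) • v x) 2) : Integrable fun x ↦ x * ‖v x‖ ^ 2 := by
  have hbound : Integrable fun x ↦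
      inner ℝ ((k + x ^ 2 / 2) • v x) (v x) + (1 / 2 - k) * inner ℝ (v x) (v x) :=
    (integrable_inner_of_memLp_two hav hv).add
      ((integrable_inner_of_memLp_two hv hv).const_mul (1 / 2 - k))
  refine hbound.mono' (by have := hv.aestronglyMeasurable; fun_prop) (ae_of_all _ fun x ↦ ?_)
  rw [norm_mul, norm_eq_abs, norm_pow, norm_norm, real_inner_smul_left,
    real_inner_self_eq_norm_sq, ← add_mul]
  gcongr
  nlinarith [sq_abs x, sq_nonneg (|x| - 1)]

lemma integrable_virialDensity (hv : MemLp v 2) (hv' : MemLp v' 2)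
    (hav : MemLp (fun x ↦ (k + x ^ 2 / 2) • v x) 2) : Integrable (virialDensity k v v') := by
  have hcos (x : ℝ) : ‖cos (arctan x) ^ 3‖ ≤ 1 := by
    rw [norm_pow]
    exact pow_le_one₀ (norm_nonneg _) (abs_cos_le_one _)
  have hcross : Integrable fun x ↦ (k + x ^ 2 / 2 + 1 / 2) * (2 * inner ℝ (v x) (v' x)) := by
    refine (((integrable_inner_of_memLp_two hav hv').const_mul 2).add
      (integrable_inner_of_memLp_two hv hv')).congr (ae_of_all _ fun x ↦ ?_)
    simp only [Pi.add_apply, real_inner_smul_left]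
    ring
  exact ((integrable_add_half_mul_norm_sq hv hav).bdd_mul (by fun_prop) (ae_of_all _ hcos)).add
    (((integrable_id_mul_norm_sq hv hav).add hcross).bdd_mul (c := 1) (by fun_prop)
      (ae_of_all _ fun x ↦ abs_sin_le_one _))

lemma lintegral_enorm_mul_enorm_sq_le_montgomery_of_memLp (hderiv : ∀ x, HasDerivAt v (v' x) x)
    (hv : MemLp v 2) (hv' : MemLp v' 2) (hav : MemLp (fun x ↦ (k + x ^ 2 / 2) • v x) 2) :
    ∫⁻ x, ‖x‖ₑ * ‖v x‖ₑ ^ 2 ≤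
      8 * ∫⁻ x, (‖v' x‖ₑ ^ 2 + ‖k + x ^ 2 / 2‖ₑ ^ 2 * ‖v x‖ₑ ^ 2) := by
  set F : ℝ → ℝ := fun x ↦ ‖v' x‖ ^ 2 + (k + x ^ 2 / 2) ^ 2 * ‖v x‖ ^ 2
  have hF_nonneg (x : ℝ) : 0 ≤ F x := by positivity
  have hF : Integrable F := by
    refine (hv'.integrable_norm_pow two_ne_zero).add ((hav.integrable_norm_pow two_ne_zero).congr
      (ae_of_all _ fun x ↦ ?_))
    simp only [norm_smul, mul_pow, norm_eq_abs, sq_abs]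
  have hD := integrable_virialDensity hv hv' hav
  have hD_zero : ∫ x, virialDensity k v v' x = 0 :=
    integral_eq_zero_of_hasDerivAt_of_integrable (fun x ↦ hasDerivAt_virialFlux (hderiv x)) hD
      (integrable_virialFlux hv hav)
  have hpt (x : ℝ) : |x| * ‖v x‖ ^ 2 ≤ 8 * F x + 4 * virialDensity k v v' x :=
    abs_mul_norm_sq_le_virialDensity x
  have hsum : Integrable fun x ↦ 8 * F x + 4 * virialDensity k v v' x :=
    (hF.const_mul 8).add (hD.const_mul 4)
  calc ∫⁻ x, ‖x‖ₑ * ‖v x‖ₑ ^ 2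
      = ∫⁻ x, ENNReal.ofReal (|x| * ‖v x‖ ^ 2) := lintegral_congr fun x ↦ by
        rw [ENNReal.ofReal_mul (abs_nonneg x), ofReal_norm_sq, ← norm_eq_abs, ofReal_norm]
    _ ≤ ∫⁻ x, ENNReal.ofReal (8 * F x + 4 * virialDensity k v v' x) :=
        lintegral_mono fun x ↦ ENNReal.ofReal_le_ofReal (hpt x)
    _ = ENNReal.ofReal (∫ x, (8 * F x + 4 * virialDensity k v v' x)) :=
        (ofReal_integral_eq_lintegral_ofReal hsum
          (ae_of_all _ fun x ↦ le_trans (by positivity) (hpt x))).symm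
    _ = 8 * ENNReal.ofReal (∫ x, F x) := by
        rw [integral_add (hF.const_mul 8) (hD.const_mul 4), integral_const_mul, integral_const_mul,
          hD_zero, mul_zero, add_zero, ENNReal.ofReal_mul (by norm_num), ENNReal.ofReal_ofNat]
    _ = 8 * ∫⁻ x, (‖v' x‖ₑ ^ 2 + ‖k + x ^ 2 / 2‖ₑ ^ 2 * ‖v x‖ₑ ^ 2) := by
        rw [ofReal_integral_eq_lintegral_ofReal hF (ae_of_all _ hF_nonneg)]
        congr 1
        refine lintegral_congr fun x ↦ ?_
        rw [ENNReal.ofReal_add (by positivity) (by positivity),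
          ENNReal.ofReal_mul (sq_nonneg _), ofReal_norm_sq, ofReal_norm_sq, ← sq_abs,
          ← norm_eq_abs, ofReal_norm_sq]

theorem lintegral_enorm_mul_enorm_sq_le_montgomery (hderiv : ∀ x, HasDerivAt v (v' x) x)
    (hv'_cont : Continuous v') (hv : MemLp v 2) :
    ∫⁻ x, ‖x‖ₑ * ‖v x‖ₑ ^ 2 ≤
      8 * ∫⁻ x, (‖v' x‖ₑ ^ 2 + ‖k + x ^ 2 / 2‖ₑ ^ 2 * ‖v x‖ₑ ^ 2) := by
  by_cases htop : ∫⁻ x, (‖v' x‖ₑ ^ 2 + ‖k + x ^ 2 / 2‖ₑ ^ 2 * ‖v x‖ₑ ^ 2) = ⊤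
  · simp [htop]
  have hfin := lt_top_iff_ne_top.2 htop
  have hv_cont : Continuous v := continuous_iff_continuousAt.2 fun x ↦ (hderiv x).continuousAt
  refine lintegral_enorm_mul_enorm_sq_le_montgomery_of_memLp hderiv hv ?_ ?_
  · rw [memLp_two_iff_lintegral_enorm_sq_lt_top (by fun_prop)]
    exact (lintegral_mono fun x ↦ le_self_add).trans_lt hfin
  · rw [memLp_two_iff_lintegral_enorm_sq_lt_top (by fun_prop)]
    simp only [enorm_smul, mul_pow]
    exact (lintegral_mono fun x ↦ le_add_self).trans_lt hfin

end OneDimensional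

section Fourier

variable {E : Type*} [NormedAddCommGroup E] [NormedSpace ℂ E] {a b : ℝ} (hab : a < b)

lemma continuous_fourier_coe (T : ℝ) (n : ℤ) : Continuous fun x : ℝ ↦ fourier n (x : AddCircle T) :=
  (map_continuous (fourier n)).comp (AddCircle.continuous_mk' T)

lemma fourierCoeffOn_sub {f g : ℝ → E} (hf : IntervalIntegrable f volume a b)
    (hg : IntervalIntegrable g volume a b) (n : ℤ) :
    fourierCoeffOn hab (fun x ↦ f x - g x) n = fourierCoeffOn hab f n - fourierCoeffOn hab g n := by
  have hchar := (continuous_fourier_coe (b - a) (-n)).continuousOn (s := uIcc a b)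
  simp only [fourierCoeffOn_eq_integral, smul_sub]
  rw [intervalIntegral.integral_sub (hf.continuousOn_smul hchar) (hg.continuousOn_smul hchar),
    smul_sub]

lemma fourierCoeffOn_deriv_of_eq {f f' : ℝ → ℂ} (hf : ∀ x ∈ uIcc a b, HasDerivAt f (f' x) x)
    (hf' : IntervalIntegrable f' volume a b) (hper : f a = f b) (n : ℤ) :
    fourierCoeffOn hab f' n =
      Complex.I * ((2 * π * n / (b - a) : ℝ) : ℂ) * fourierCoeffOn hab f n := by
  rcases eq_or_ne n 0 with rfl | hn
  · simp [fourierCoeffOn_eq_integral, intervalIntegral.integral_eq_sub_of_hasDerivAt hf hf', hper]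
  · have hba : (b : ℂ) - a ≠ 0 := by exact_mod_cast (sub_pos.2 hab).ne'
    have hn' : (n : ℂ) ≠ 0 := by exact_mod_cast hn
    have hπ : (π : ℂ) ≠ 0 := by exact_mod_cast pi_ne_zero
    rw [fourierCoeffOn_of_hasDerivAt hab hn hf hf', hper]
    push_cast
    field_simp
    ring

lemma lintegral_enorm_sq_eq_tsum_fourierCoeffOn {f : ℝ → ℂ}
    (hf : MemLp f 2 (volume.restrict (Ioc a b))) :
    ∫⁻ x in Ioc a b, ‖f x‖ₑ ^ 2 =
      ENNReal.ofReal (b - a) * ∑' n : ℤ, ‖fourierCoeffOn hab f n‖ₑ ^ 2 := by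
  have hsum := hasSum_sq_fourierCoeffOn hab hf
  simp only [← ofReal_norm_sq]
  rw [← ENNReal.ofReal_tsum_of_nonneg (fun n ↦ sq_nonneg _) hsum.summable, hsum.tsum_eq,
    ← ENNReal.ofReal_mul (sub_pos.2 hab).le, smul_eq_mul, mul_inv_cancel_left₀ (sub_pos.2 hab).ne',
    intervalIntegral.integral_of_le hab.le,
    ofReal_integral_eq_lintegral_ofReal (hf.integrable_norm_pow two_ne_zero)
      (ae_of_all _ fun x ↦ sq_nonneg _)]

variable {Y : Type*}

/-- The `n`-th Fourier coefficient of `f` in its first variable over `(a, b)`, as a function of the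
second variable. -/
def partialFourierCoeff (f : ℝ × Y → E) (n : ℤ) (y : Y) : E :=
  fourierCoeffOn hab (fun x ↦ f (x, y)) n

lemma partialFourierCoeff_eq_integral (f : ℝ × Y → E) (n : ℤ) :
    partialFourierCoeff hab f n = fun y ↦
      (1 / (b - a)) • ∫ x in a..b, fourier (-n) (x : AddCircle (b - a)) • f (x, y) :=
  funext fun _ ↦ fourierCoeffOn_eq_integral _ n hab

lemma continuous_partialFourierCoeff [TopologicalSpace Y] [FirstCountableTopology Y] {f : ℝ × Y → E}
    (hf : Continuous f) (n : ℤ) : Continuous (partialFourierCoeff hab f n) := by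
  rw [partialFourierCoeff_eq_integral]
  refine Continuous.fun_const_smul
    (intervalIntegral.continuous_parametric_intervalIntegral_of_continuous' ?_ a b) _
  exact ((continuous_fourier_coe (b - a) (-n)).comp continuous_snd).smul (hf.comp continuous_swap)

lemma hasDerivAt_partialFourierCoeff {f f' : ℝ × ℝ → E} (hf : Continuous f) (hf' : Continuous f')
    (hderiv : ∀ x y, HasDerivAt (fun t ↦ f (x, t)) (f' (x, y)) y) (n : ℤ) (y : ℝ) :
    HasDerivAt (partialFourierCoeff hab f n) (partialFourierCoeff hab f' n y) y := by
  have hchar := continuous_fourier_coe (b - a) (-n)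
  obtain ⟨C, hC⟩ := (isCompact_Icc.prod isCompact_Icc).exists_bound_of_continuousOn
    (s := Icc a b ×ˢ Icc (y - 1) (y + 1))
    ((hchar.comp continuous_fst).smul hf').continuousOn
  simp only [partialFourierCoeff_eq_integral]
  refine HasDerivAt.fun_const_smul _
    (intervalIntegral.hasDerivAt_integral_of_dominated_loc_of_deriv_le
      (F := fun y x ↦ fourier (-n) (x : AddCircle (b - a)) • f (x, y))
      (F' := fun y x ↦ fourier (-n) (x : AddCircle (b - a)) • f' (x, y))
      (bound := fun _ ↦ C) (Icc_mem_nhds (sub_one_lt y) (lt_add_one y))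
      (.of_forall fun y ↦ ?_) ?_ ?_ ?_ intervalIntegrable_const ?_).2
  · exact (hchar.smul (hf.comp (.prodMk_left y))).aestronglyMeasurable
  · exact (hchar.smul (hf.comp (.prodMk_left y))).intervalIntegrable a b
  · exact (hchar.smul (hf'.comp (.prodMk_left y))).aestronglyMeasurable
  · refine ae_of_all _ fun x hx t ht ↦ hC (x, t) ⟨?_, ht⟩
    exact Ioc_subset_Icc_self (uIoc_of_le hab.le ▸ hx)
  · exact ae_of_all _ fun x _ t _ ↦ (hderiv x t).fun_const_smul _

theorem lintegral_mul_enorm_sq_eq_tsum_partialFourierCoeff [TopologicalSpace Y]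
    [SecondCountableTopology Y] [MeasurableSpace Y] [OpensMeasurableSpace Y] {ν : Measure Y}
    [SFinite ν] {f : ℝ × Y → ℂ} (hf : Continuous f) {c : Y → ENNReal} (hc : Measurable c) :
    ∫⁻ z, c z.2 * ‖f z‖ₑ ^ 2 ∂(volume.restrict (Ioc a b)).prod ν =
      ENNReal.ofReal (b - a) * ∑' n : ℤ, ∫⁻ y, c y * ‖partialFourierCoeff hab f n y‖ₑ ^ 2 ∂ν := by
  have hcoeff (n : ℤ) : Measurable fun y ↦ c y * ‖partialFourierCoeff hab f n y‖ₑ ^ 2 :=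
    hc.mul ((continuous_partialFourierCoeff hab hf n).enorm.measurable.pow_const 2)
  have hslice (y : Y) : Continuous fun x ↦ f (x, y) := hf.comp (.prodMk_left y)
  have hparseval (y : Y) : ∫⁻ x in Ioc a b, ‖f (x, y)‖ₑ ^ 2 =
      ENNReal.ofReal (b - a) * ∑' n : ℤ, ‖partialFourierCoeff hab f n y‖ₑ ^ 2 := by
    refine lintegral_enorm_sq_eq_tsum_fourierCoeffOn hab ?_
    refine (memLp_two_iff_integrable_sq_norm (hslice y).aestronglyMeasurable).2 ?_
    exact ((hslice y).norm.pow 2).integrableOn_Icc.mono_set Ioc_subset_Icc_self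
  have hmeas : Measurable fun z : ℝ × Y ↦ c z.2 * ‖f z‖ₑ ^ 2 :=
    (hc.comp measurable_snd).mul (hf.enorm.measurable.pow_const 2)
  rw [lintegral_prod_symm _ hmeas.aemeasurable, ← lintegral_tsum fun n ↦ (hcoeff n).aemeasurable,
    ← lintegral_const_mul _ (.tsum hcoeff)]
  refine lintegral_congr fun y ↦ ?_
  dsimp only
  rw [lintegral_const_mul _ ((hslice y).enorm.measurable.pow_const 2), hparseval,
    ENNReal.tsum_mul_left, mul_left_comm]

end Fourier

section Magnetic

lemma hasDerivAt_slice_fst {E : Type*} [NormedAddCommGroup E] [NormedSpace ℝ E] {u : ℝ × ℝ → E}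
    (hu : Differentiable ℝ u) (x y : ℝ) :
    HasDerivAt (fun t ↦ u (t, y)) (fderiv ℝ u (x, y) (1, 0)) x :=
  (hu (x, y)).hasFDerivAt.comp_hasDerivAt x ((hasDerivAt_id x).prodMk (hasDerivAt_const x y))

lemma hasDerivAt_slice_snd {E : Type*} [NormedAddCommGroup E] [NormedSpace ℝ E] {u : ℝ × ℝ → E}
    (hu : Differentiable ℝ u) (x y : ℝ) :
    HasDerivAt (fun t ↦ u (x, t)) (fderiv ℝ u (x, y) (0, 1)) y :=
  (hu (x, y)).hasFDerivAt.comp_hasDerivAt y ((hasDerivAt_const y x).prodMk (hasDerivAt_id y))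

lemma continuous_fderiv_const_apply {E F : Type*} [NormedAddCommGroup E] [NormedSpace ℝ E]
    [NormedAddCommGroup F] [NormedSpace ℝ F] {u : E → F} (hu : ContDiff ℝ 1 u) (e : E) :
    Continuous fun z ↦ fderiv ℝ u z e :=
  (hu.continuous_fderiv one_ne_zero).clm_apply continuous_const

lemma magGradSq_nonneg (A : ℝ × ℝ → ℝ × ℝ) (u : ℝ × ℝ → ℂ) (z : ℝ × ℝ) : 0 ≤ magGradSq A u z :=
  add_nonneg (sq_nonneg _) (sq_nonneg _)

/-- The horizontal covariant derivative `(∂₁ - i A₁) u` for the potential `Avan`. -/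
def covDerivFst (u : ℝ × ℝ → ℂ) (z : ℝ × ℝ) : ℂ :=
  fderiv ℝ u z (1, 0) - Complex.I * ((Avan z).1 : ℂ) * u z

lemma ofReal_magGradSq_Avan (u : ℝ × ℝ → ℂ) (z : ℝ × ℝ) :
    ENNReal.ofReal (magGradSq Avan u z) = ‖fderiv ℝ u z (0, 1)‖ₑ ^ 2 + ‖covDerivFst u z‖ₑ ^ 2 := by
  rw [magGradSq, ENNReal.ofReal_add (sq_nonneg _) (sq_nonneg _), ofReal_norm_sq, ofReal_norm_sq,
    add_comm]
  simp [covDerivFst, Avan]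

variable {a b : ℝ} {u : ℝ × ℝ → ℂ}

lemma continuous_covDerivFst (hu : ContDiff ℝ 1 u) : Continuous (covDerivFst u) := by
  have hA : Continuous fun z ↦ Complex.I * ((Avan z).1 : ℂ) := by
    unfold Avan
    fun_prop
  exact (continuous_fderiv_const_apply hu (1, 0)).sub (hA.mul hu.continuous)

lemma partialFourierCoeff_covDerivFst (hab : a < b) (hu : ContDiff ℝ 1 u) {y : ℝ}
    (hper : u (a, y) = u (b, y)) (n : ℤ) :
    partialFourierCoeff hab (covDerivFst u) n y =
      Complex.I * ((2 * π * n / (b - a) + y ^ 2 / 2 : ℝ) : ℂ) * partialFourierCoeff hab u n y := by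
  have hd : Continuous fun x ↦ fderiv ℝ u (x, y) (1, 0) :=
    (continuous_fderiv_const_apply hu (1, 0)).comp (.prodMk_left y)
  have hslice : Continuous fun x ↦ u (x, y) := hu.continuous.comp (.prodMk_left y)
  have hpotential : Continuous fun x ↦ Complex.I * ((-y ^ 2 / 2 : ℝ) : ℂ) * u (x, y) :=
    continuous_const.mul hslice
  simp only [partialFourierCoeff, covDerivFst, Avan]
  rw [fourierCoeffOn_sub hab (hd.intervalIntegrable a b) (hpotential.intervalIntegrable a b),
    fourierCoeffOn_deriv_of_eq hab
      (fun x _ ↦ hasDerivAt_slice_fst (hu.differentiable one_ne_zero) x y)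
      (hd.intervalIntegrable a b) hper,
    fourierCoeffOn.const_mul]
  push_cast
  ring

lemma memLp_partialFourierCoeff (hab : a < b) (hu : Continuous u)
    (hu₂ : MemLp u 2 ((volume.restrict (Ioc a b)).prod volume)) (n : ℤ) :
    MemLp (partialFourierCoeff hab u n) 2 := by
  rw [memLp_two_iff_lintegral_enorm_sq_lt_top hu.aestronglyMeasurable] at hu₂
  rw [memLp_two_iff_lintegral_enorm_sq_lt_top
    (continuous_partialFourierCoeff hab hu n).aestronglyMeasurable]
  have hparseval := lintegral_mul_enorm_sq_eq_tsum_partialFourierCoeff hab (ν := volume) hu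
    (measurable_const (a := 1))
  simp only [one_mul] at hparseval
  rw [hparseval] at hu₂
  exact (ENNReal.le_tsum n).trans_lt
    (ENNReal.lt_top_of_mul_ne_top_right hu₂.ne (by simpa using hab))

lemma lintegral_magGradSq_Avan_eq_tsum (hab : a < b) (hu : ContDiff ℝ 1 u)
    (hper : ∀ y, u (a, y) = u (b, y)) :
    ∫⁻ z, ENNReal.ofReal (magGradSq Avan u z) ∂(volume.restrict (Ioc a b)).prod volume =
      ENNReal.ofReal (b - a) * ∑' n : ℤ, ∫⁻ y,
        (‖partialFourierCoeff hab (fun z ↦ fderiv ℝ u z (0, 1)) n y‖ₑ ^ 2 +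
          ‖2 * π * n / (b - a) + y ^ 2 / 2‖ₑ ^ 2 * ‖partialFourierCoeff hab u n y‖ₑ ^ 2) := by
  have hd₂ := continuous_fderiv_const_apply hu (0, 1)
  have hd₁ := continuous_covDerivFst hu
  have hparseval {f : ℝ × ℝ → ℂ} (hf : Continuous f) :=
    lintegral_mul_enorm_sq_eq_tsum_partialFourierCoeff hab (ν := volume) hf
      (measurable_const (a := 1))
  simp only [one_mul] at hparseval
  simp only [ofReal_magGradSq_Avan]
  rw [lintegral_add_left (by fun_prop), hparseval hd₂, hparseval hd₁, ← mul_add, ← ENNReal.tsum_add]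
  congr! 3 with n
  have hcoeff := continuous_partialFourierCoeff hab hd₂ n
  rw [← lintegral_add_left (by fun_prop)]
  refine lintegral_congr fun y ↦ ?_
  rw [partialFourierCoeff_covDerivFst hab hu (hper y), enorm_mul, enorm_mul, mul_pow,
    ← ofReal_norm Complex.I, Complex.norm_I, ENNReal.ofReal_one, one_mul,
    ← ofReal_norm (Complex.ofReal _), Complex.norm_real, ofReal_norm]

theorem lintegral_enorm_snd_mul_enorm_sq_le_magGradSq_Avan (hab : a < b) (hu : ContDiff ℝ 1 u)
    (hu₂ : MemLp u 2 ((volume.restrict (Ioc a b)).prod volume))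
    (hper : ∀ y, u (a, y) = u (b, y)) :
    ∫⁻ z, ‖z.2‖ₑ * ‖u z‖ₑ ^ 2 ∂(volume.restrict (Ioc a b)).prod volume ≤
      8 * ∫⁻ z, ENNReal.ofReal (magGradSq Avan u z) ∂(volume.restrict (Ioc a b)).prod volume := by
  have hd₂ := continuous_fderiv_const_apply hu (0, 1)
  rw [lintegral_mul_enorm_sq_eq_tsum_partialFourierCoeff hab hu.continuous measurable_enorm,
    lintegral_magGradSq_Avan_eq_tsum hab hu hper, mul_left_comm,
    ← ENNReal.tsum_mul_left (a := 8)]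
  refine mul_le_mul_right (ENNReal.tsum_le_tsum fun n ↦ ?_) _
  exact lintegral_enorm_mul_enorm_sq_le_montgomery
    (hasDerivAt_partialFourierCoeff hab hu.continuous hd₂
      (hasDerivAt_slice_snd (hu.differentiable one_ne_zero)) n)
    (continuous_partialFourierCoeff hab hd₂ n) (memLp_partialFourierCoeff hab hu.continuous hu₂ n)

end Magnetic

section Strip

variable {L R : ℝ} {φ : ℝ × ℝ → ℂ}

lemma restrict_Strip (R : ℝ) : (volume : Measure (ℝ × ℝ)).restrict (Strip R) =
    (volume.restrict (Ioc (-R / 2) (R / 2))).prod volume := by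
  rw [Strip, Measure.volume_eq_prod, ← Measure.prod_restrict, Measure.restrict_univ,
    restrict_Ioo_eq_restrict_Ioc]

lemma measure_restrict_Strip_abs_snd_lt (hR : 0 < R) (t : ℝ) :
    volume.restrict (Strip R) {z | |z.2| < t} = ENNReal.ofReal (R * (2 * t)) := by
  have hset : {z : ℝ × ℝ | |z.2| < t} = univ ×ˢ Ioo (-t) t := by
    ext z
    simp [abs_lt]
  rw [restrict_Strip, hset, Measure.prod_prod, Measure.restrict_apply_univ, volume_Ioc, volume_Ioo,
    ENNReal.ofReal_mul hR.le]
  congr 2 <;> ring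

lemma MemH1mag0.apply_left_eq_apply_right (hR : 0 < R) (hφ : MemH1mag0 R φ) (y : ℝ) :
    φ (-R / 2, y) = φ (R / 2, y) := by
  have hzero {x : ℝ} (hx : x ∈ ({-R / 2, R / 2} : Set ℝ)) : φ (x, y) = 0 := by
    refine hφ.2.2.2.2 _ ?_
    rw [Strip, frontier_prod_univ_eq, frontier_Ioo (by linarith)]
    exact ⟨hx, mem_univ y⟩
  rw [hzero (by simp), hzero (by simp)]

lemma MemH1mag0.lintegral_abs_snd_mul_norm_sq_le (hR : 0 < R) (hφ : MemH1mag0 R φ) :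
    ∫⁻ z in Strip R, ENNReal.ofReal (|z.2| * ‖φ z‖ ^ 2) ≤
      ENNReal.ofReal (8 * ∫ z in Strip R, magGradSq Avan φ z) := by
  have ⟨hφ_diff, hφ₂, hφ_grad, _, _⟩ := hφ
  have hL2 : MemLp φ 2 (volume.restrict (Strip R)) :=
    (memLp_two_iff_integrable_sq_norm hφ_diff.continuous.aestronglyMeasurable).2 hφ₂
  have hbound := lintegral_enorm_snd_mul_enorm_sq_le_magGradSq_Avan (a := -R / 2) (b := R / 2)
    (by linarith) hφ_diff (restrict_Strip R ▸ hL2)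
    (hφ.apply_left_eq_apply_right hR)
  rw [← restrict_Strip, ← ofReal_integral_eq_lintegral_ofReal hφ_grad
    (ae_of_all _ (magGradSq_nonneg Avan φ))] at hbound
  rw [ENNReal.ofReal_mul (by norm_num), ENNReal.ofReal_ofNat]
  refine (lintegral_congr fun z ↦ ?_).trans_le hbound
  rw [ENNReal.ofReal_mul (abs_nonneg _), ofReal_norm_sq, ← norm_eq_abs, ofReal_norm]

lemma MemH1mag0.integrableOn_abs_snd_mul_norm_sq (hR : 0 < R) (hφ : MemH1mag0 R φ) :
    IntegrableOn (fun z ↦ |z.2| * ‖φ z‖ ^ 2) (Strip R) := by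
  have hφ_cont := hφ.1.continuous
  refine ⟨Continuous.aestronglyMeasurable (by fun_prop), ?_⟩
  rw [hasFiniteIntegral_iff_ofReal (ae_of_all _ fun z ↦ by positivity)]
  exact (hφ.lintegral_abs_snd_mul_norm_sq_le hR).trans_lt ENNReal.ofReal_lt_top

lemma MemH1mag0.setIntegral_abs_snd_mul_norm_sq_le (hR : 0 < R) (hφ : MemH1mag0 R φ) :
    ∫ z in Strip R, |z.2| * ‖φ z‖ ^ 2 ≤ 8 * ∫ z in Strip R, magGradSq Avan φ z := by
  have hgrad : 0 ≤ ∫ z in Strip R, magGradSq Avan φ z := integral_nonneg (magGradSq_nonneg Avan φ)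
  rw [← ENNReal.ofReal_le_ofReal_iff (by positivity), ofReal_integral_eq_lintegral_ofReal
    (hφ.integrableOn_abs_snd_mul_norm_sq hR) (ae_of_all _ fun z ↦ by positivity)]
  exact hφ.lintegral_abs_snd_mul_norm_sq_le hR

lemma MemH1mag0.Estrip_eq (hφ : MemH1mag0 R φ) (L : ℝ) :
    Estrip L R φ = (∫ z in Strip R, magGradSq Avan φ z)
      - L ^ (-(2 : ℝ) / 3) * (∫ z in Strip R, ‖φ z‖ ^ 2)
      + L ^ (-(2 : ℝ) / 3) / 2 * ∫ z in Strip R, ‖φ z‖ ^ 4 := by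
  obtain ⟨-, hφ₂, hφ_grad, hφ₄, -⟩ := hφ
  unfold Estrip stripDensity
  rw [integral_add (by exact hφ_grad.sub (hφ₂.const_mul _)) (hφ₄.const_mul _),
    integral_sub hφ_grad (hφ₂.const_mul _), integral_const_mul, integral_const_mul]

lemma magGradSq_zero (A : ℝ × ℝ → ℝ × ℝ) : magGradSq A 0 = 0 := by
  ext z
  simp [magGradSq]

lemma memH1mag0_zero (R : ℝ) : MemH1mag0 R 0 :=
  ⟨contDiff_const, by simp, by rw [magGradSq_zero]; exact integrableOn_zero, by simp,
    fun _ _ ↦ rfl⟩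

lemma egs_nonpos (L R : ℝ) : egs L R ≤ 0 :=
  Real.sInf_nonpos' ⟨_, mem_image_of_mem _ (memH1mag0_zero R),
    by simp [Estrip, stripDensity, magGradSq_zero]⟩

end Strip

theorem strip_minimizer_L2_bound_general {L R : ℝ} (hL : 0 < L) (hR : 0 < R) {φ : ℝ × ℝ → ℂ}
    (hφ : MemH1mag0 R φ) (hE : Estrip L R φ ≤ 0) :
    (∫ x in Strip R, ‖φ x‖ ^ 2) ≤ 256 * L ^ (-(2 : ℝ) / 3) * R := by
  have hκ : 0 < L ^ (-(2 : ℝ) / 3) := rpow_pos_of_pos hL _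
  have hweighted := hφ.setIntegral_abs_snd_mul_norm_sq_le hR
  rw [hφ.Estrip_eq] at hE
  set κ := L ^ (-(2 : ℝ) / 3)
  have hgrad : 0 ≤ ∫ z in Strip R, magGradSq Avan φ z := integral_nonneg (magGradSq_nonneg Avan φ)
  have hquartic : 0 ≤ ∫ z in Strip R, ‖φ z‖ ^ 4 := integral_nonneg fun z ↦ by positivity
  have hgrad_le : ∫ z in Strip R, magGradSq Avan φ z ≤ κ * ∫ z in Strip R, ‖φ z‖ ^ 2 := by
    linarith [mul_nonneg hκ.le hquartic]
  have hquartic_le : ∫ z in Strip R, ‖φ z‖ ^ 4 ≤ 2 * ∫ z in Strip R, ‖φ z‖ ^ 2 :=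
    le_of_mul_le_mul_left (by linarith) hκ
  have hband := measure_restrict_Strip_abs_snd_lt hR (16 * κ)
  have hmass := integral_norm_sq_le_of_integral_mul_norm_sq_le (μ := volume.restrict (Strip R))
    (f := φ) (ρ := fun z ↦ |z.2|) (t := 16 * κ) (by positivity) (by fun_prop)
    (fun z ↦ abs_nonneg _) (hband ▸ ENNReal.ofReal_ne_top) hφ.2.1 hφ.2.2.2.1
    (hφ.integrableOn_abs_snd_mul_norm_sq hR) (by linarith) hquartic_le
  rw [measureReal_def, hband, ENNReal.toReal_ofReal (by positivity)] at hmass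
  linarith

/-- `L²`-bound on the minimizers of `e_gs(L;R)`. -/
theorem strip_minimizer_L2_bound :
    ∃ C > (0:ℝ), ∀ L : ℝ, 0 < L → ∀ R : ℝ, 0 < R → ∀ φ : ℝ × ℝ → ℂ,
      MemH1mag0 R φ → Estrip L R φ = egs L R →
      (∫ x in Strip R, ‖φ x‖ ^ 2) ≤ C * L ^ (-(2:ℝ)/3) * R :=
  ⟨256, by norm_num, fun L hL R hR _ hφ hmin ↦
    strip_minimizer_L2_bound_general hL hR hφ (hmin.trans_le (egs_nonpos L R))⟩

end
end
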